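/- Let G be a finite group and let f : G → ℂ be any function. Then (1/|G|²) ∑_{a,b ∈ G} f(aba⁻¹b⁻¹) = ∑_{ρ ∈ Irr(G)} ⟨f, χ_ρ⟩ / dim ρ, where ⟨f, χ_ρ⟩ = (1/|G|) ∑_{g} f(g) conj(χ_ρ(g)). -/

import Mathlib

/-!
By Schur's lemma, `∑ a, ρ (a * b * a⁻¹)` is a scalar on an irreducible representation `ρ`, and so
is `∑ b, χ_ρ b⁻¹ • ρ b`; their traces determine these scalars, and combining the two gives
`∑ a, ∑ b, ρ (a * b * a⁻¹ * b⁻¹) = (|G| / dim ρ) ^ 2`. On the other hand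
`∑ ρ, dim ρ * χ_ρ g` is `|G|` for `g = 1` and `0` otherwise: the corresponding element of the group
algebra acts correctly on every irreducible representation by orthogonality of characters, and
the group algebra is semisimple. Hence `f x = |G|⁻¹ * ∑ ρ, dim ρ * ∑ g, f g * χ_ρ (x * g⁻¹)`, and
averaging over commutators `x` turns `dim ρ` into `1 / dim ρ` and `χ_ρ (x * g⁻¹)` into `χ_ρ g⁻¹`.
Over `ℂ` the latter is the conjugate of `χ_ρ g`, because `ρ` preserves a positive definite form.
-/

open CategoryTheory Module
open scoped MonoidAlgebra

universe u v

section Schur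

variable {k : Type u} [Field k] [IsAlgClosed k] {G : Type v}

theorem exists_eq_smul_one_of_forall_commute [Monoid G] (V : FDRep k G) [Simple V]
    {T : End k V} (hT : ∀ g, Commute T (V.ρ g)) : ∃ c : k, T = c • 1 := by
  let F : V ⟶ V := ⟨InducedCategory.homMk (ModuleCat.ofHom T), fun g ↦ by
    ext x
    exact LinearMap.congr_fun (hT g) x⟩
  obtain ⟨c, hc⟩ := endomorphism_simple_eq_smul_id k F
  exact ⟨c, congrArg (fun φ : V ⟶ V ↦ φ.hom.hom.hom) hc.symm⟩

theorem finrank_smul_eq_trace_smul_one [Monoid G] (V : FDRep k G) [Simple V]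
    {T : End k V} (hT : ∀ g, Commute T (V.ρ g)) :
    (finrank k V : k) • T = LinearMap.trace k V T • 1 := by
  obtain ⟨c, rfl⟩ := exists_eq_smul_one_of_forall_commute V hT
  rw [map_smul, LinearMap.trace_one, smul_smul, smul_eq_mul, mul_comm]

variable [Group G] [Fintype G]

theorem finrank_smul_sum_conj (V : FDRep k G) [Simple V] (b : G) :
    (finrank k V : k) • ∑ a, V.ρ (a * b * a⁻¹) = (Nat.card G * V.character b) • 1 := by
  have hcomm (h : G) : Commute (∑ a, V.ρ (a * b * a⁻¹)) (V.ρ h) := by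
    symm
    simp only [commute_iff_eq, Finset.sum_mul, Finset.mul_sum, ← map_mul]
    exact Fintype.sum_equiv (Equiv.mulLeft h) _ _ fun a ↦ by simp [mul_assoc]
  have htrace : LinearMap.trace k V (∑ a, V.ρ (a * b * a⁻¹)) = Nat.card G * V.character b := by
    rw [map_sum]
    exact (Fintype.sum_congr _ _ (V.char_conj b)).trans (by simp)
  rw [finrank_smul_eq_trace_smul_one V hcomm, htrace]

theorem finrank_smul_sum_smul_of_forall_conj_eq (V : FDRep k G) [Simple V] {φ : G → k}
    (hφ : ∀ g h, φ (h * g * h⁻¹) = φ g) :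
    (finrank k V : k) • ∑ g, φ g • V.ρ g = (∑ g, φ g * V.character g) • 1 := by
  have hcomm (h : G) : Commute (∑ g, φ g • V.ρ g) (V.ρ h) := by
    symm
    simp only [commute_iff_eq, Finset.sum_mul, Finset.mul_sum, mul_smul_comm, smul_mul_assoc,
      ← map_mul]
    exact Fintype.sum_equiv (MulAut.conj h).toEquiv _ _ fun g ↦ by simp [hφ]
  rw [finrank_smul_eq_trace_smul_one V hcomm]
  simp [FDRep.character]

end Schur

section Orthogonality

variable {k : Type u} [Field k] [IsAlgClosed k] {G : Type v} [Group G]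
  [NeZero (Nat.card G : k)]

open scoped Classical in
theorem sum_character_inv_mul_character [Fintype G] (V W : FDRep k G) [Simple V] [Simple W] :
    ∑ g, V.character g⁻¹ * W.character g = if Nonempty (V ≅ W) then (Nat.card G : k) else 0 := by
  have := invertibleOfNonzero (NeZero.ne (Nat.card G : k))
  have h := FDRep.char_orthonormal W V
  rw [inv_mul_eq_iff_eq_mul₀ (NeZero.ne _), Iso.nonempty_iso_symm] at h
  simpa [mul_comm] using h

open scoped Classical in
theorem finrank_smul_sum_character_inv_smul [Fintype G] (V W : FDRep k G) [Simple V] [Simple W] :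
    (finrank k W : k) • ∑ g, V.character g⁻¹ • W.ρ g =
      (if Nonempty (V ≅ W) then (Nat.card G : k) else 0) • 1 := by
  rw [finrank_smul_sum_smul_of_forall_conj_eq W fun g h ↦ ?_, sum_character_inv_mul_character]
  simpa [mul_assoc] using V.char_conj g⁻¹ h

theorem cast_finrank_ne_zero [Finite G] (V : FDRep k G) [Simple V] : (finrank k V : k) ≠ 0 := by
  have := Fintype.ofFinite G
  intro hdim
  have hcard : (Nat.card G : k) • (1 : End k V) = 0 := by
    simpa [hdim, Nonempty.intro (Iso.refl V)] using
      (finrank_smul_sum_character_inv_smul V V).symm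
  have hone : (1 : End k V) = 0 := (smul_eq_zero.1 hcard).resolve_left (NeZero.ne _)
  apply id_nonzero V
  ext x
  exact LinearMap.congr_fun hone x

theorem finrank_sq_smul_sum_commutator [Fintype G] (V : FDRep k G) [Simple V] :
    (finrank k V : k) ^ 2 • ∑ a, ∑ b, V.ρ (a * b * a⁻¹ * b⁻¹) = (Nat.card G : k) ^ 2 • 1 := by
  set d : k := (finrank k V : k)
  set n : k := (Nat.card G : k)
  calc d ^ 2 • ∑ a, ∑ b, V.ρ (a * b * a⁻¹ * b⁻¹)
      = d • ∑ b, (d • ∑ a, V.ρ (a * b * a⁻¹)) * V.ρ b⁻¹ := by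
        rw [Finset.sum_comm, sq, mul_smul]
        simp only [map_mul _ _ (_⁻¹ : G), Finset.smul_sum, Finset.sum_mul, smul_mul_assoc]
    _ = n • d • ∑ b, V.character b • V.ρ b⁻¹ := by
        simp only [d, n, finrank_smul_sum_conj, smul_mul_assoc, one_mul, mul_smul,
          ← Finset.smul_sum]
        exact smul_comm _ _ _
    _ = n • d • ∑ b, V.character b⁻¹ • V.ρ b := by
        rw [← Equiv.sum_comp (Equiv.inv G)]
        simp
    _ = n ^ 2 • 1 := by
        rw [finrank_smul_sum_character_inv_smul, if_pos ⟨Iso.refl V⟩, smul_smul, sq]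

theorem sum_character_commutator_mul [Fintype G] (V : FDRep k G) [Simple V] (h : G) :
    ∑ a, ∑ b, V.character (a * b * a⁻¹ * b⁻¹ * h) =
      (Nat.card G / finrank k V : k) ^ 2 * V.character h := by
  have key := congrArg (fun T : End k V ↦ LinearMap.trace k V (T * V.ρ h))
    (finrank_sq_smul_sum_commutator V)
  simp only [smul_mul_assoc, Finset.sum_mul, ← map_mul, one_mul, map_smul, map_sum,
    smul_eq_mul] at key
  rw [div_pow, div_mul_eq_mul_div, eq_div_iff (pow_ne_zero 2 (cast_finrank_ne_zero V)), mul_comm]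
  exact key

end Orthogonality

section Semisimple

theorem smul_eq_zero_of_forall_isSimpleModule {R M : Type*} [Ring R] [AddCommGroup M] [Module R M]
    [IsSemisimpleModule R M] {r : R}
    (hr : ∀ N : Submodule R M, IsSimpleModule R N → ∀ x ∈ N, r • x = 0) (m : M) : r • m = 0 := by
  have hm : m ∈ sSup {N : Submodule R M | IsSimpleModule R N} := by
    simp [IsSemisimpleModule.sSup_simples_eq_top]
  rw [sSup_eq_iSup'] at hm
  induction hm using Submodule.iSup_induction' with
  | mem N x hx => exact hr N N.2 x hx
  | zero => exact smul_zero r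
  | add x y _ _ hx hy => rw [smul_add, hx, hy, add_zero]

variable {k : Type*} [Field k] {G : Type*} [Monoid G] (M : Type*) [AddCommGroup M] [Module k M]
  [Module k[G] M] [IsScalarTower k k[G] M]

theorem asAlgebraHom_ofModule' :
    (Representation.ofModule' M : Representation k G M).asAlgebraHom = Algebra.lsmul k k M :=
  (MonoidAlgebra.lift k (End k M) G).apply_symm_apply _

theorem isIrreducible_ofModule' [IsSimpleModule k[G] M] :
    (Representation.ofModule' M : Representation k G M).IsIrreducible := by
  set ρ : Representation k G M := Representation.ofModule' M
  let e : ρ.asModule ≃ₗ[k[G]] M :=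
    { ρ.asModuleEquiv with
      map_smul' := fun x ↦
        LinearMap.congr_fun (DFunLike.congr_fun (asAlgebraHom_ofModule' M) x) }
  exact (Representation.irreducible_iff_isSimpleModule_asModule ρ).2 (IsSimpleModule.congr e)

end Semisimple

section Completeness

variable {k : Type u} [Field k] [IsAlgClosed k] {G : Type u} [Group G]
  [NeZero (Nat.card G : k)]

theorem simple_of_isIrreducible [Finite G] {V : Type u}
    [AddCommGroup V] [Module k V] [FiniteDimensional k V] (ρ : Representation k G V)
    [ρ.IsIrreducible] : Simple (FDRep.of ρ) := by
  rw [FDRep.simple_iff_end_is_rank_one,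
    ← (Representation.linHom.invariantsEquivFDRepHom (FDRep.of ρ) (FDRep.of ρ)).finrank_eq]
  exact (Representation.invariantsEquivIntertwiningMap ρ ρ).finrank_eq.trans
    (Representation.IsIrreducible.finrank_intertwiningMap_self ρ)

theorem eq_zero_of_forall_simple_asAlgebraHom_eq_zero [Finite G] {z : k[G]}
    (hz : ∀ V : FDRep k G, Simple V → Representation.asAlgebraHom V.ρ z = 0) : z = 0 := by
  suffices h : ∀ x : k[G], z • x = 0 by simpa using h 1
  refine smul_eq_zero_of_forall_isSimpleModule fun I hI x hx ↦ ?_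
  have := isIrreducible_ofModule' (k := k) (G := G) I
  have hzI := hz _ (simple_of_isIrreducible (Representation.ofModule' I))
  rw [FDRep.of_ρ', asAlgebraHom_ofModule'] at hzI
  exact congrArg Subtype.val (LinearMap.congr_fun hzI ⟨x, hx⟩)

theorem eq_of_forall_simple_sum_smul_eq [Fintype G] {φ ψ : G → k}
    (h : ∀ V : FDRep k G, Simple V → ∑ g, φ g • V.ρ g = ∑ g, ψ g • V.ρ g) : φ = ψ := by
  have hz : ∑ g, MonoidAlgebra.single g (φ g - ψ g) = 0 :=
    eq_zero_of_forall_simple_asAlgebraHom_eq_zero fun V hV ↦ by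
      simp [h V hV]
  classical
  ext g
  simpa [Finsupp.single_apply, sub_eq_zero] using congrArg (fun x : k[G] ↦ x.coeff g) hz

variable {ι : Type*} [Fintype ι] {W : ι → FDRep k G} (hsimple : ∀ i, Simple (W i))
  (hdist : ∀ i j, Nonempty (W i ≅ W j) → i = j)
  (hall : ∀ V : FDRep k G, Simple V → ∃ i, Nonempty (V ≅ W i))

include hsimple hdist hall

theorem sum_finrank_smul_sum_character_inv_smul [Fintype G] (V : FDRep k G) [Simple V] :
    ∑ i, (finrank k (W i) : k) • ∑ g, (W i).character g⁻¹ • V.ρ g = (Nat.card G : k) • 1 := by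
  obtain ⟨j, ⟨e⟩⟩ := hall V ‹_›
  have hdim : (finrank k (W j) : k) = finrank k V := by
    rw [← FDRep.char_one, ← FDRep.char_one, FDRep.char_iso e]
  rw [Fintype.sum_eq_single j fun i hij ↦ ?_, hdim, finrank_smul_sum_character_inv_smul,
    if_pos ⟨e.symm⟩]
  have hiso : ¬ Nonempty (W i ≅ V) := fun ⟨e'⟩ ↦ hij (hdist i j ⟨e' ≪≫ e⟩)
  have horth := finrank_smul_sum_character_inv_smul (W i) V
  rw [if_neg hiso, zero_smul] at horth
  rw [(smul_eq_zero.1 horth).resolve_left (cast_finrank_ne_zero V), smul_zero]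

theorem sum_finrank_mul_character [Finite G] [DecidableEq G] (g : G) :
    ∑ i, (finrank k (W i) : k) * (W i).character g = if g = 1 then (Nat.card G : k) else 0 := by
  have := Fintype.ofFinite G
  have key : (fun g ↦ ∑ i, (finrank k (W i) : k) * (W i).character g⁻¹) =
      fun g ↦ if g = 1 then (Nat.card G : k) else 0 := by
    refine eq_of_forall_simple_sum_smul_eq fun V _ ↦ ?_
    have h := sum_finrank_smul_sum_character_inv_smul hsimple hdist hall V
    simp only [Finset.smul_sum, smul_smul] at h
    rw [Finset.sum_comm] at h
    simpa [Finset.sum_smul] using h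
  simpa using congrFun key g⁻¹

theorem eq_inv_card_mul_sum_finrank_mul_sum_character [Fintype G] (f : G → k) (x : G) :
    f x = (Nat.card G : k)⁻¹ *
      ∑ i, (finrank k (W i) : k) * ∑ g, f g * (W i).character (x * g⁻¹) := by
  classical
  rw [eq_inv_mul_iff_mul_eq₀ (NeZero.ne _)]
  symm
  calc ∑ i, (finrank k (W i) : k) * ∑ g, f g * (W i).character (x * g⁻¹)
      = ∑ g, f g * ∑ i, (finrank k (W i) : k) * (W i).character (x * g⁻¹) := by
        simp only [Finset.mul_sum, mul_left_comm]
        exact Finset.sum_comm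
    _ = Nat.card G * f x := by
        simp only [sum_finrank_mul_character hsimple hdist hall, mul_inv_eq_one]
        simp [mul_comm]

theorem average_f_commutator_eq_sum_inner_div_dim_general [Fintype G] (f : G → k) :
    ((Nat.card G : k) ^ 2)⁻¹ * ∑ a, ∑ b, f (a * b * a⁻¹ * b⁻¹) =
      ∑ i, ((Nat.card G : k)⁻¹ * ∑ g, f g * (W i).character g⁻¹) / finrank k (W i) := by
  set n : k := (Nat.card G : k)
  have hn : n ≠ 0 := NeZero.ne _
  have hsum (i : ι) : ∑ a, ∑ b, ∑ g, f g * (W i).character (a * b * a⁻¹ * b⁻¹ * g⁻¹) =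
      (n / finrank k (W i)) ^ 2 * ∑ g, f g * (W i).character g⁻¹ := by
    simp only [Finset.sum_comm_cycle, ← Finset.mul_sum, sum_character_commutator_mul]
    simp only [Finset.mul_sum, mul_left_comm, n]
  calc (n ^ 2)⁻¹ * ∑ a, ∑ b, f (a * b * a⁻¹ * b⁻¹)
      = (n ^ 2)⁻¹ * ∑ a, ∑ b, n⁻¹ * ∑ i, (finrank k (W i) : k) *
          ∑ g, f g * (W i).character (a * b * a⁻¹ * b⁻¹ * g⁻¹) := by
        simp only [n, ← eq_inv_card_mul_sum_finrank_mul_sum_character hsimple hdist hall f]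
    _ = (n ^ 2)⁻¹ * (n⁻¹ * ∑ i, (finrank k (W i) : k) *
          ∑ a, ∑ b, ∑ g, f g * (W i).character (a * b * a⁻¹ * b⁻¹ * g⁻¹)) := by
        simp only [← Finset.mul_sum]
        rw [Finset.sum_comm_cycle]
        simp only [← Finset.mul_sum]
    _ = ∑ i, (n⁻¹ * ∑ g, f g * (W i).character g⁻¹) / finrank k (W i) := by
        simp only [hsum, Finset.mul_sum (s := (Finset.univ : Finset ι))]
        refine Fintype.sum_congr _ _ fun i ↦ ?_
        have hd := cast_finrank_ne_zero (W i)
        field_simp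

end Completeness

section ComplexConjugation

open scoped ComplexOrder

theorem trace_eq_star_trace_of_mul_eq_one {R n : Type*} [CommRing R] [StarRing R] [Fintype n]
    [DecidableEq n] {A B P : Matrix n n R} (hP : IsUnit P) (hA : A.conjTranspose * P * A = P)
    (hAB : A * B = 1) : B.trace = star A.trace := by
  have hconj : A.conjTranspose * P = P * B :=
    calc A.conjTranspose * P = A.conjTranspose * P * A * B := by rw [mul_assoc _ A, hAB, mul_one]
      _ = P * B := by rw [hA]
  rw [← Matrix.trace_conjTranspose, ← Matrix.trace_conj hP, ← hconj, Matrix.mul_assoc,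
    Matrix.mul_nonsing_inv _ ((Matrix.isUnit_iff_isUnit_det _).1 hP), mul_one]

variable {𝕜 : Type*} [RCLike 𝕜] {G : Type*} [Group G] [Finite G]

theorem exists_posDef_forall_conjTranspose_mul_mul_eq {n : Type*} [Fintype n] [DecidableEq n]
    (M : G →* Matrix n n 𝕜) :
    ∃ P : Matrix n n 𝕜, P.PosDef ∧ ∀ g, (M g).conjTranspose * P * M g = P := by
  classical
  have := Fintype.ofFinite G
  refine ⟨∑ g, (M g).conjTranspose * M g, ?_, fun h ↦ ?_⟩
  · rw [← Finset.add_sum_erase _ _ (Finset.mem_univ 1)]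
    refine Matrix.PosDef.add_posSemidef (by simpa using Matrix.PosDef.one) ?_
    exact Matrix.posSemidef_sum _ fun g _ ↦ Matrix.posSemidef_conjTranspose_mul_self _
  · simp only [Finset.mul_sum, Finset.sum_mul]
    exact Fintype.sum_equiv (Equiv.mulRight h) _ _ fun g ↦ by
      simp [Matrix.conjTranspose_mul, Matrix.mul_assoc]

theorem character_inv_eq_star {V : Type*} [AddCommGroup V] [Module 𝕜 V] [FiniteDimensional 𝕜 V]
    (ρ : Representation 𝕜 G V) (g : G) : ρ.character g⁻¹ = star (ρ.character g) := by
  let b := finBasis 𝕜 V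
  let M := (MonoidHomClass.toMonoidHom (LinearMap.toMatrixAlgEquiv b)).comp ρ
  have htrace (h : G) : ρ.character h = (M h).trace := LinearMap.trace_eq_matrix_trace 𝕜 b _
  obtain ⟨P, hP, hinv⟩ := exists_posDef_forall_conjTranspose_mul_mul_eq M
  have hmul : M g * M g⁻¹ = 1 := by rw [← map_mul, mul_inv_cancel, map_one]
  rw [htrace, htrace, trace_eq_star_trace_of_mul_eq_one hP.isUnit (hinv g) hmul]

end ComplexConjugation

theorem average_f_commutator_eq_sum_inner_div_dim
    (G : Type) [Group G] [Fintype G]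
    (ι : Type*) [Fintype ι] (W : ι → FDRep ℂ G)
    (hsimple : ∀ i, CategoryTheory.Simple (W i))
    (hdist : ∀ i j, Nonempty (W i ≅ W j) → i = j)
    (hall : ∀ V : FDRep ℂ G, CategoryTheory.Simple V → ∃ i, Nonempty (V ≅ W i))
    (f : G → ℂ) :
    (((Fintype.card G : ℂ) ^ 2)⁻¹) * ∑ a : G, ∑ b : G, f (a * b * a⁻¹ * b⁻¹) =
      ∑ i, ((Fintype.card G : ℂ)⁻¹ * ∑ g : G, f g * (starRingEnd ℂ) ((W i).character g)) /
        (Module.finrank ℂ (W i) : ℂ) := by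
  have hconj (i : ι) (g : G) : (starRingEnd ℂ) ((W i).character g) = (W i).character g⁻¹ :=
    (character_inv_eq_star (W i).ρ g).symm
  simpa only [hconj, Nat.card_eq_fintype_card] using
    average_f_commutator_eq_sum_inner_div_dim_general hsimple hdist hall f
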